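/- Let φ: ℕ → (0,∞) be a positive function with liminf_{n→∞} (log φ(n))/n = ∞, and let log b = liminf_{n→∞} (log log φ(n))/n, where b ∈ [1,∞]. Then the Hausdorff dimension of F₂(φ) equals 1/(1+b) (interpreted as 0 when b = ∞). -/

import Mathlib

/-!
Both bounds compare `F2 φ` with sets on which single partial quotients are large.

*Upper bound.* Let `P_n = a_1 ⋯ a_n`. The points of a cylinder of order `n` whose next partial
quotient is at least `N` form a set of diameter at most `P_n⁻² / N`. Hence the set of `x` such that,
for every `B`, infinitely often `a_{n+1} ≥ P_n ^ α * exp (B n)`, has dimension at most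
`1 / (2 + α)`: the `s`-sum of the cover of order `n` is `(exp (-B s) ∑ k ^ (-(2 + α) s)) ^ n`, and
`B` is free (`dimH_le_of_frequently`). If `x` is not in this set, then
`log P_{n+1} ≤ (1 + α) log P_n + B n` eventually, so `log P_n = O(n² (1 + α) ^ n)`; this contradicts
`a_k a_{k+1} ≥ φ n ≥ exp (c ^ n)`, with `k ≤ n`, as soon as `1 + α < c` (`upper_of_gt`). Letting
`1 + α` and `c` tend to `b` gives `1 / (1 + b)`. For `b = 1` one takes `α = 0` and uses that
`log φ` grows faster than linearly (`upper_half`).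

*Lower bound.* If `c > b` then `φ n ≤ exp (c ^ n)` infinitely often, and then `a_n ≥ exp (c ^ n)`
makes both `a_{n-1} a_n` and `a_n a_{n+1}` at least `φ n`. So, up to rational numbers, `F2 φ`
contains the set where `a_n ≥ exp (c ^ n)` for all `n`. With `M n = ⌈exp (c ^ (n + 1))⌉`, the points
with `a_{n+1} = M n + d n`, `0 ≤ d n < M n`, are mapped onto `[0, 1)` by the Cantor series with
digits `d n` in the bases `M n`. This map is Hölder of any exponent `r < 1 / (c + 1)`, so the set
has dimension at least `r` (`le_dimH_fast`).
-/

open scoped ENNReal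
open MeasureTheory Filter

/-- The Gauss map `T(x) = 1/x - ⌊1/x⌋`. -/
noncomputable def gaussMap (x : ℝ) : ℝ := 1 / x - ⌊1 / x⌋

/-- The `n`-th partial quotient `a_n(x) = ⌊1 / T^{n-1}(x)⌋` (for `n ≥ 1`). -/
noncomputable def pq (x : ℝ) (n : ℕ) : ℕ := ⌊1 / (gaussMap^[n - 1] x)⌋₊

/-- The set `F₂(φ)` of irrational `x ∈ (0,1)` such that for infinitely many `n` there are
`1 ≤ k ≠ l ≤ n` with `a_k a_{k+1} ≥ φ(n)` and `a_l a_{l+1} ≥ φ(n)`. -/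
def F2 (φ : ℕ → ℝ) : Set ℝ :=
  {x | x ∈ Set.Ioo (0 : ℝ) 1 ∧ Irrational x ∧
    {n : ℕ | ∃ k l : ℕ, 1 ≤ k ∧ k ≤ n ∧ 1 ≤ l ∧ l ≤ n ∧ k ≠ l ∧
      φ n ≤ (pq x k : ℝ) * (pq x (k + 1) : ℝ) ∧
      φ n ≤ (pq x l : ℝ) * (pq x (l + 1) : ℝ)}.Infinite}

/-! ### Continued fractions and distances in cylinders -/

/-- The Gauss orbit of `x` never leaves `(0, 1)`, so that `x` has an infinite expansion. -/
def InfExp (x : ℝ) : Prop := ∀ n, gaussMap^[n] x ∈ Set.Ioo (0 : ℝ) 1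

lemma infExp_of_irrational {x : ℝ} (hx : x ∈ Set.Ioo (0 : ℝ) 1) (hi : Irrational x) :
    InfExp x := by
  have key : ∀ n, gaussMap^[n] x ∈ Set.Ioo (0 : ℝ) 1 ∧ Irrational (gaussMap^[n] x) := by
    intro n
    induction n with
    | zero => exact ⟨hx, hi⟩
    | succ n ih =>
      rw [Function.iterate_succ_apply']
      set y := gaussMap^[n] x
      have hirr : Irrational (gaussMap y) := by
        unfold gaussMap
        rw [one_div]
        exact ih.2.inv.sub_intCast _
      have hf : gaussMap y = Int.fract (1 / y) := rfl
      refine ⟨⟨lt_of_le_of_ne ?_ hirr.ne_zero.symm, ?_⟩, hirr⟩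
      · rw [hf]; exact Int.fract_nonneg _
      · rw [hf]; exact Int.fract_lt_one _
  exact fun n => (key n).1

lemma InfExp.inv_eq {x : ℝ} (h : InfExp x) (n : ℕ) :
    1 / gaussMap^[n] x = pq x (n + 1) + gaussMap^[n + 1] x := by
  have h0 := h n
  rw [Function.iterate_succ_apply']
  have hnn : (0 : ℝ) ≤ 1 / gaussMap^[n] x := by have := h0.1; positivity
  simp only [pq, gaussMap, Nat.add_sub_cancel]
  change 1 / gaussMap^[n] x = ((⌊1 / gaussMap^[n] x⌋₊ : ℕ) : ℝ) + _
  rw [natCast_floor_eq_intCast_floor hnn]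
  ring

lemma InfExp.pq_pos {x : ℝ} (h : InfExp x) (n : ℕ) : 1 ≤ pq x (n + 1) := by
  have h0 := h n
  unfold pq
  rw [Nat.le_floor_iff' one_ne_zero, Nat.add_sub_cancel, Nat.cast_one, le_div_iff₀ h0.1]
  linarith [h0.2]

lemma InfExp.le_inv {x : ℝ} (h : InfExp x) (n : ℕ) :
    gaussMap^[n] x ≤ (pq x (n + 1) : ℝ)⁻¹ := by
  have h1 := h.inv_eq n
  have h2 := (h (n + 1)).1
  have h3 : (1 : ℝ) ≤ pq x (n + 1) := by exact_mod_cast h.pq_pos n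
  rw [le_inv_comm₀ (h n).1 (by linarith), ← one_div, h1]
  linarith

lemma InfExp.inv_le {x : ℝ} (h : InfExp x) (n : ℕ) :
    ((pq x (n + 1) : ℝ) + 1)⁻¹ ≤ gaussMap^[n] x := by
  have h1 := h.inv_eq n
  have h2 := (h (n + 1)).2
  have h3 : (1 : ℝ) ≤ pq x (n + 1) := by exact_mod_cast h.pq_pos n
  rw [inv_le_comm₀ (by linarith) (h n).1, ← one_div, h1]
  linarith

lemma abs_sub_inv_eq {u v : ℝ} (hu : 0 < u) (hv : 0 < v) :
    |u - v| = |1 / u - 1 / v| * (u * v) := by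
  have : u - v = -(1 / u - 1 / v) * (u * v) := by field_simp; ring
  rw [this, abs_mul, abs_neg, abs_of_pos (mul_pos hu hv)]

/-- Exact distance formula on a cylinder: `x - y` is the difference of the `n`-th tails, scaled by
the derivatives of the inverse branches, which telescope to the product of the orbit points. -/
lemma abs_sub_eq_prod {x y : ℝ} (hx : InfExp x) (hy : InfExp y) (n : ℕ)
    (h : ∀ i < n, pq x (i + 1) = pq y (i + 1)) :
    |x - y| = |gaussMap^[n] x - gaussMap^[n] y| *
      ∏ i ∈ Finset.range n, (gaussMap^[i] x * gaussMap^[i] y) := by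
  induction n with
  | zero => simp
  | succ n ih =>
    rw [ih fun i hi => h i (by omega), Finset.prod_range_succ,
      abs_sub_inv_eq (hx n).1 (hy n).1, hx.inv_eq, hy.inv_eq, h n (by omega)]
    rw [add_sub_add_left_eq_sub]
    ring

/-! ### Covers by cylinders -/

lemma tsum_fin_prod (g : ℕ → ℝ≥0∞) (n : ℕ) :
    ∑' w : Fin n → ℕ, ∏ i, g (w i) = (∑' k, g k) ^ n := by
  induction n with
  | zero => simp
  | succ n ih =>
    rw [← (Fin.consEquiv fun _ : Fin (n + 1) => ℕ).tsum_eq, ENNReal.tsum_prod']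
    simp only [Fin.consEquiv_apply, Fin.prod_univ_succ, Fin.cons_zero, Fin.cons_succ]
    simp only [ENNReal.tsum_mul_left, ENNReal.tsum_mul_right]
    rw [ih, pow_succ']

/-- The part of the cylinder of the word `w` on which the next partial quotient is at least
`(∏ w i) ^ α * exp (B * n)`. -/
def longCyl (α B : ℝ) (n : ℕ) (w : Fin n → ℕ) : Set ℝ :=
  {x | InfExp x ∧ (∀ i : Fin n, pq x (i + 1) = w i) ∧
    (∏ i, (w i : ℝ)) ^ α * Real.exp (B * n) ≤ pq x (n + 1)}

lemma ediam_longCyl_le {α B : ℝ} (n : ℕ) (w : Fin n → ℕ) :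
    Metric.ediam (longCyl α B n w) ≤
      ∏ i, ENNReal.ofReal ((w i : ℝ) ^ (-(2 + α)) * Real.exp (-B)) := by
  rw [Metric.ediam_le_iff]
  rintro x ⟨hx, hxw, hxB⟩ y ⟨hy, hyw, hyB⟩
  have hw : ∀ i, (0 : ℝ) < w i := fun i => by
    rw [← hxw i]; exact_mod_cast hx.pq_pos i
  have hP : 0 < ∏ i, (w i : ℝ) := Finset.prod_pos fun i _ => hw i
  rw [← ENNReal.ofReal_prod_of_nonneg (fun i _ => by positivity), edist_dist, Real.dist_eq]
  apply ENNReal.ofReal_le_ofReal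
  rw [abs_sub_eq_prod hx hy n (fun i hi => (hxw ⟨i, hi⟩).trans (hyw ⟨i, hi⟩).symm),
    Finset.prod_range]
  have hN : 0 < (∏ i, (w i : ℝ)) ^ α * Real.exp (B * n) := by positivity
  have e1 : gaussMap^[n] x ≤ ((∏ i, (w i : ℝ)) ^ α * Real.exp (B * n))⁻¹ :=
    (hx.le_inv n).trans (inv_anti₀ hN hxB)
  have e2 : gaussMap^[n] y ≤ ((∏ i, (w i : ℝ)) ^ α * Real.exp (B * n))⁻¹ :=
    (hy.le_inv n).trans (inv_anti₀ hN hyB)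
  have e3 : |gaussMap^[n] x - gaussMap^[n] y| ≤
      ((∏ i, (w i : ℝ)) ^ α * Real.exp (B * n))⁻¹ := by
    have := (hx n).1
    have := (hy n).1
    rw [abs_le]; constructor <;> linarith
  have e4 : ∏ i : Fin n, (gaussMap^[i] x * gaussMap^[i] y) ≤ ∏ i, ((w i : ℝ)⁻¹ * (w i : ℝ)⁻¹) := by
    apply Finset.prod_le_prod
    · intro i _; exact mul_nonneg (hx i).1.le (hy i).1.le
    · intro i _
      have a1 := hx.le_inv i
      have a2 := hy.le_inv i
      rw [hxw i] at a1
      rw [hyw i] at a2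
      exact mul_le_mul a1 a2 (hy i).1.le (inv_nonneg.2 (hw i).le)
  have e5 : ∏ i, ((w i : ℝ) ^ (-(2 + α)) * Real.exp (-B)) =
      ((∏ i, (w i : ℝ)) ^ α * Real.exp (B * n))⁻¹ * ∏ i, ((w i : ℝ)⁻¹ * (w i : ℝ)⁻¹) := by
    rw [← Real.finsetProd_rpow _ _ (fun i _ => (hw i).le), mul_comm B, Real.exp_nat_mul]
    have : Real.exp B ^ n = ∏ _i : Fin n, Real.exp B := by simp
    rw [this, ← Finset.prod_mul_distrib, ← Finset.prod_inv_distrib, ← Finset.prod_mul_distrib]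
    apply Finset.prod_congr rfl
    intro i _
    rw [neg_add, Real.rpow_add (hw i), Real.rpow_neg (hw i).le, Real.rpow_neg (hw i).le,
      Real.exp_neg, Real.rpow_two]
    have := (hw i).ne'
    have := (Real.rpow_pos_of_pos (hw i) α).ne'
    field_simp
  rw [e5]
  exact mul_le_mul e3 e4 (Finset.prod_nonneg fun i _ => mul_nonneg (hx i).1.le (hy i).1.le)
    (inv_nonneg.2 hN.le)

/-- If infinitely often `a_{n+1} ≥ (a_1 ⋯ a_n)^α e^{Bn}`, for every `B`, then the dimension is at
most `1 / (2 + α)`: the natural covers by `longCyl` have `s`-sums at most `2⁻ⁿ` once `B` is large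
in terms of `∑ k^{-(2 + α) s}`. -/
lemma dimH_le_of_frequently {α : ℝ} (hα : 0 ≤ α) {s : NNReal} (hs : 1 < (2 + α) * s) {E : Set ℝ}
    (hE : ∀ x ∈ E, InfExp x)
    (hfr : ∀ B : ℝ, 0 < B → ∀ x ∈ E, ∃ᶠ n : ℕ in atTop,
      (∏ i ∈ Finset.range n, (pq x (i + 1) : ℝ)) ^ α * Real.exp (B * n) ≤ pq x (n + 1)) :
    dimH E ≤ s := by
  have hs0 : (0 : ℝ) < s := by
    by_contra h
    have : (s : ℝ) = 0 := le_antisymm (not_lt.1 h) s.2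
    rw [this] at hs; norm_num at hs
  -- `B` is chosen so large that `exp (-B s)` times the zeta value is at most `1 / 2`.
  have hsum : Summable fun k : ℕ => (k : ℝ) ^ (-((2 + α) * s)) :=
    Real.summable_nat_rpow.2 (by linarith)
  set Z := ∑' k : ℕ, (k : ℝ) ^ (-((2 + α) * s)) with hZ
  obtain ⟨B, hB0, hB⟩ : ∃ B : ℝ, 0 < B ∧ Z * Real.exp (-(B * s)) ≤ 1 / 2 := by
    have h1 : Tendsto (fun B : ℝ => Z * Real.exp (-(B * s))) atTop (nhds (Z * 0)) :=
      (Real.tendsto_exp_neg_atTop_nhds_zero.comp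
        (tendsto_id.atTop_mul_const hs0)).const_mul Z
    rw [mul_zero] at h1
    obtain ⟨B, h⟩ := ((h1.eventually_lt_const (u := 1 / 2) (by norm_num)).and
      (eventually_gt_atTop 0)).exists
    exact ⟨B, h.2, h.1.le⟩
  set g : ℕ → ℝ≥0∞ := fun k => ENNReal.ofReal ((k : ℝ) ^ (-(2 + α)) * Real.exp (-B)) with hg
  have hgs : ∑' k, g k ^ (s : ℝ) ≤ 2⁻¹ := by
    have : ∀ k, g k ^ (s : ℝ) =
        ENNReal.ofReal ((k : ℝ) ^ (-((2 + α) * s)) * Real.exp (-(B * s))) := by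
      intro k
      rw [hg]
      simp only
      rw [ENNReal.ofReal_rpow_of_nonneg (by positivity) hs0.le,
        Real.mul_rpow (by positivity) (by positivity), ← Real.rpow_mul (by positivity),
        ← Real.exp_mul]
      ring_nf
    simp_rw [this]
    rw [← ENNReal.ofReal_tsum_of_nonneg (fun k => by positivity) (hsum.mul_right _),
      tsum_mul_right, ← hZ]
    refine (ENNReal.ofReal_le_ofReal hB).trans ?_
    rw [one_div, ENNReal.ofReal_inv_of_pos two_pos]
    simp
  have hge : ∀ k, g k ≤ ENNReal.ofReal (Real.exp (-B)) := by
    intro k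
    apply ENNReal.ofReal_le_ofReal
    refine mul_le_of_le_one_left (Real.exp_pos _).le ?_
    rcases Nat.eq_zero_or_pos k with rfl | hk
    · rw [Nat.cast_zero, Real.zero_rpow (by linarith)]; norm_num
    · exact Real.rpow_le_one_of_one_le_of_nonpos (by exact_mod_cast hk) (by linarith)
  have he1 : ENNReal.ofReal (Real.exp (-B)) < 1 := by
    rw [ENNReal.ofReal_lt_one, Real.exp_lt_one_iff]; linarith
  apply dimH_le_of_hausdorffMeasure_ne_top
  have key := Measure.hausdorffMeasure_le_liminf_tsum (β := ℕ)
    (ι := fun N => Σ k : ℕ, (Fin (N + k) → ℕ)) (s : ℝ) E (l := atTop)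
    (fun N => ENNReal.ofReal (Real.exp (-B)) ^ N)
    (ENNReal.tendsto_pow_atTop_nhds_zero_of_lt_one he1)
    (fun N p => longCyl α B (N + p.1) p.2) ?_ ?_
  · refine ne_top_of_le_ne_top (b := 2) (by norm_num) (key.trans ?_)
    refine (liminf_le_liminf (v := fun _ => (2 : ℝ≥0∞)) (Eventually.of_forall fun N => ?_)).trans ?_
    · rw [ENNReal.tsum_sigma (fun k w => Metric.ediam (longCyl α B (N + k) w) ^ (s : ℝ))]
      calc ∑' (k : ℕ) (w : Fin (N + k) → ℕ), Metric.ediam (longCyl α B (N + k) w) ^ (s : ℝ)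
          ≤ ∑' (k : ℕ) (w : Fin (N + k) → ℕ), ∏ i, g (w i) ^ (s : ℝ) := by
            gcongr with k w
            rw [ENNReal.prod_rpow_of_nonneg hs0.le]
            exact ENNReal.rpow_le_rpow (ediam_longCyl_le _ _) hs0.le
        _ = ∑' k : ℕ, (∑' j, g j ^ (s : ℝ)) ^ (N + k) := by
            congr 1; ext k; exact tsum_fin_prod (fun j => g j ^ (s : ℝ)) _
        _ ≤ ∑' k : ℕ, (2⁻¹ : ℝ≥0∞) ^ k := by
            refine ENNReal.tsum_le_tsum fun k => ?_
            calc (∑' j, g j ^ (s : ℝ)) ^ (N + k) ≤ (2⁻¹ : ℝ≥0∞) ^ (N + k) := by gcongr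
              _ ≤ (2⁻¹ : ℝ≥0∞) ^ k := pow_le_pow_right_of_le_one' (by simp) (by omega)
        _ = 2 := by simp [ENNReal.tsum_geometric]
    · simp
  · refine Eventually.of_forall fun N p => (ediam_longCyl_le _ _).trans ?_
    calc ∏ i, g (p.2 i) ≤ ∏ _i : Fin (N + p.1), ENNReal.ofReal (Real.exp (-B)) :=
          Finset.prod_le_prod' fun i _ => hge _
      _ = ENNReal.ofReal (Real.exp (-B)) ^ (N + p.1) := by simp
      _ ≤ _ := pow_le_pow_right_of_le_one' he1.le (by omega)
  · refine Eventually.of_forall fun N x hx => ?_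
    obtain ⟨n, hn, h⟩ := (frequently_atTop.1 (hfr B hB0 x hx)) N
    obtain ⟨k, rfl⟩ := Nat.exists_eq_add_of_le hn
    refine Set.mem_iUnion.2 ⟨⟨k, fun i => pq x (i + 1)⟩, hE x hx, fun i => rfl, ?_⟩
    rwa [← Finset.prod_range (fun i => (pq x (i + 1) : ℝ))]

/-! ### Growth of the products of partial quotients and the upper bound -/

/-- `log (a_1 ⋯ a_n)`. -/
noncomputable def logProd (x : ℝ) (n : ℕ) : ℝ := ∑ i ∈ Finset.range n, Real.log (pq x (i + 1))

lemma logProd_succ (x : ℝ) (n : ℕ) :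
    logProd x (n + 1) = logProd x n + Real.log (pq x (n + 1)) := by
  simp [logProd, Finset.sum_range_succ]

lemma logProd_nonneg (x : ℝ) (n : ℕ) : 0 ≤ logProd x n :=
  Finset.sum_nonneg fun _ _ => Real.log_natCast_nonneg _

lemma logProd_mono (x : ℝ) : Monotone (logProd x) := by
  apply monotone_nat_of_le_succ
  intro n
  rw [logProd_succ]
  linarith [Real.log_natCast_nonneg (pq x (n + 1))]

lemma exp_logProd {x : ℝ} (h : InfExp x) (n : ℕ) :
    Real.exp (logProd x n) = ∏ i ∈ Finset.range n, (pq x (i + 1) : ℝ) := by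
  rw [logProd, Real.exp_sum]
  exact Finset.prod_congr rfl fun i _ => Real.exp_log (by exact_mod_cast h.pq_pos i)

/-- The failure of the lower bound in `dimH_le_of_frequently`, in logarithmic form. -/
lemma log_pq_le_of_not_frequently {x α B : ℝ} (hx : InfExp x)
    (h : ¬ ∃ᶠ n : ℕ in atTop,
      (∏ i ∈ Finset.range n, (pq x (i + 1) : ℝ)) ^ α * Real.exp (B * n) ≤ pq x (n + 1)) :
    ∃ n₀, ∀ n ≥ n₀, Real.log (pq x (n + 1)) ≤ α * logProd x n + B * n := by
  rw [not_frequently, eventually_atTop] at h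
  obtain ⟨n₀, h⟩ := h
  refine ⟨n₀, fun n hn => ?_⟩
  have h1 := h n hn
  rw [not_le, ← exp_logProd hx, ← Real.exp_mul, ← Real.exp_add] at h1
  have hp : (0 : ℝ) < pq x (n + 1) := by exact_mod_cast hx.pq_pos n
  rw [Real.log_le_iff_le_exp hp, mul_comm α]
  exact h1.le

/-- A recursion `Q_{n+1} ≤ (1 + α) Q_n + B n` forces `Q_n = O(n² (1 + α)ⁿ)`. -/
lemma exists_logProd_le {x α B : ℝ} (hα : 0 ≤ α) (hB : 0 < B)
    (h : ∃ n₀, ∀ n ≥ n₀, Real.log (pq x (n + 1)) ≤ α * logProd x n + B * n) :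
    ∃ K : ℝ, ∀ n : ℕ, logProd x n ≤ K * ((n + 1) ^ 2 * (1 + α) ^ n) := by
  obtain ⟨n₀, h⟩ := h
  set K := max B (logProd x n₀) with hK
  have hK0 : 0 < K := lt_of_lt_of_le hB (le_max_left _ _)
  have hbig : ∀ n : ℕ, 1 ≤ ((n : ℝ) + 1) ^ 2 * (1 + α) ^ n := fun n =>
    one_le_mul_of_one_le_of_one_le (one_le_pow₀ (by linarith [n.cast_nonneg (α := ℝ)]))
      (one_le_pow₀ (by linarith))
  refine ⟨K, fun n => ?_⟩
  rcases le_total n n₀ with hn | hn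
  · exact ((logProd_mono x hn).trans (le_max_right B _)).trans
      (le_mul_of_one_le_right hK0.le (hbig n))
  · induction n, hn using Nat.le_induction with
    | base => exact (le_max_right B _).trans (le_mul_of_one_le_right hK0.le (hbig n₀))
    | succ n hn ih =>
      have h1 := h n hn
      have hp : (1 : ℝ) ≤ (1 + α) ^ (n + 1) := one_le_pow₀ (by linarith)
      have h2 : B * n ≤ K * ((1 + α) ^ (n + 1) * n) := by
        apply mul_le_mul (le_max_left _ _) _ (by positivity) hK0.le
        exact le_mul_of_one_le_left (by positivity) hp
      have h3 : (1 + α) * logProd x n ≤ (1 + α) * (K * (((n : ℝ) + 1) ^ 2 * (1 + α) ^ n)) :=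
        mul_le_mul_of_nonneg_left ih (by linarith)
      have h4 : 0 ≤ K * (1 + α) ^ (n + 1) * ((n : ℝ) + 3) := by positivity
      rw [logProd_succ]
      push_cast
      have : K * (((n : ℝ) + 1 + 1) ^ 2 * (1 + α) ^ (n + 1)) =
        (1 + α) * (K * (((n : ℝ) + 1) ^ 2 * (1 + α) ^ n)) + K * ((1 + α) ^ (n + 1) * n)
          + K * (1 + α) ^ (n + 1) * (n + 3) := by ring
      rw [this]
      linarith

lemma log_pq_mul {x : ℝ} (hx : InfExp x) {k : ℕ} (hk : 1 ≤ k) :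
    Real.log ((pq x k : ℝ) * pq x (k + 1)) = Real.log (pq x k) + Real.log (pq x (k + 1)) := by
  obtain ⟨k, rfl⟩ := Nat.exists_eq_add_of_le' hk
  have h1 := hx.pq_pos k
  have h2 := hx.pq_pos (k + 1)
  apply Real.log_mul <;> exact_mod_cast (by omega)

lemma log_pq_mul_le {x : ℝ} (hx : InfExp x) {k : ℕ} (hk : 1 ≤ k) :
    Real.log ((pq x k : ℝ) * pq x (k + 1)) ≤ logProd x (k + 1) := by
  rw [log_pq_mul hx hk]
  obtain ⟨k, rfl⟩ := Nat.exists_eq_add_of_le' hk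
  rw [logProd_succ, logProd_succ]
  linarith [logProd_nonneg x k]

/-- The upper bound in the doubly exponential case: if `a_{n+1} ≥ (a_1 ⋯ a_n)^α e^{Bn}` held only
finitely often, then `log (a_1 ⋯ a_n) = O(n² (1 + α)ⁿ)` would fall below `c ^ n ≤ log φ n`. -/
lemma upper_of_gt {φ : ℕ → ℝ} (hpos : ∀ n, 0 < φ n) {c α : ℝ} (hα : 0 ≤ α) (hc : 1 + α < c)
    (hφ : ∀ᶠ n : ℕ in atTop, c ^ n ≤ Real.log (φ n)) {s : NNReal} (hs : 1 < (2 + α) * s) :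
    dimH (F2 φ) ≤ s := by
  refine dimH_le_of_frequently hα hs (fun x hx => infExp_of_irrational hx.1 hx.2.1) ?_
  rintro B hB x ⟨hx01, hxi, hinf⟩
  have hx := infExp_of_irrational hx01 hxi
  by_contra hcon
  obtain ⟨K, hK⟩ := exists_logProd_le hα hB (log_pq_le_of_not_frequently hx hcon)
  have hfr : ∃ᶠ n : ℕ in atTop, Real.log (φ n) ≤ K * (((n + 1 : ℕ) + 1) ^ 2 * (1 + α) ^ (n + 1)) := by
    refine (Nat.frequently_atTop_iff_infinite.2 hinf).mono ?_
    rintro n ⟨k, l, hk1, hkn, -, -, -, hk, -⟩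
    calc Real.log (φ n) ≤ _ := Real.log_le_log (hpos n) hk
      _ ≤ logProd x (k + 1) := log_pq_mul_le hx hk1
      _ ≤ logProd x (n + 1) := logProd_mono x (by omega)
      _ ≤ _ := hK _
  have hc0 : 0 < c := by linarith
  have hlim : Tendsto (fun n : ℕ => (4 * |K| * (1 + α)) * ((n : ℝ) ^ 2 * ((1 + α) / c) ^ n))
      atTop (nhds ((4 * |K| * (1 + α)) * 0)) :=
    (tendsto_pow_const_mul_const_pow_of_lt_one 2 (by positivity)
      ((div_lt_one hc0).2 hc)).const_mul _
  rw [mul_zero] at hlim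
  obtain ⟨n, hn1, hn2, hn3, hn4⟩ := (hfr.and_eventually (hφ.and
    ((hlim.eventually_lt_const one_pos).and (eventually_ge_atTop 2)))).exists
  have h2 : (2 : ℝ) ≤ n := by exact_mod_cast hn4
  have hcn : 0 < c ^ n := by positivity
  rw [div_pow, ← mul_div_assoc, ← mul_div_assoc, div_lt_one hcn] at hn3
  have h5 : K * (((n + 1 : ℕ) + 1 : ℝ) ^ 2 * (1 + α) ^ (n + 1)) ≤
      (4 * |K| * (1 + α)) * ((n : ℝ) ^ 2 * (1 + α) ^ n) := by
    have : (((n + 1 : ℕ) : ℝ) + 1) ^ 2 ≤ 4 * (n : ℝ) ^ 2 := by push_cast; nlinarith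
    calc K * (((n + 1 : ℕ) + 1 : ℝ) ^ 2 * (1 + α) ^ (n + 1))
        ≤ |K| * ((4 * (n : ℝ) ^ 2) * (1 + α) ^ (n + 1)) := by
          gcongr
          exact le_abs_self K
      _ = _ := by ring
  linarith

/-- The upper bound `1 / 2`, valid as soon as `log φ` grows faster than linearly. -/
lemma upper_half {φ : ℕ → ℝ} (hpos : ∀ n, 0 < φ n)
    (hφ : ∀ D : ℝ, ∀ᶠ n : ℕ in atTop, D * n < Real.log (φ n)) {s : NNReal} (hs : 1 < 2 * (s : ℝ)) :
    dimH (F2 φ) ≤ s := by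
  refine dimH_le_of_frequently le_rfl (by simpa using hs)
    (fun x hx => infExp_of_irrational hx.1 hx.2.1) ?_
  rintro B hB x ⟨hx01, hxi, hinf⟩
  have hx := infExp_of_irrational hx01 hxi
  by_contra hcon
  obtain ⟨n₀, h⟩ := log_pq_le_of_not_frequently hx hcon
  have hall : ∀ n : ℕ, Real.log (pq x (n + 1)) ≤ logProd x n₀ + B * n := by
    intro n
    rcases lt_or_ge n n₀ with hn | hn
    · have h1 := logProd_mono x (show n + 1 ≤ n₀ by omega)
      rw [logProd_succ] at h1
      have : 0 ≤ B * n := by positivity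
      linarith [logProd_nonneg x n]
    · have := h n hn
      linarith [logProd_nonneg x n₀]
  set C := logProd x n₀
  have hC : 0 ≤ C := logProd_nonneg x n₀
  obtain ⟨n, ⟨k, l, hk1, hkn, -, -, -, hk, -⟩, hn2, hn3⟩ :=
    ((Nat.frequently_atTop_iff_infinite.2 hinf).and_eventually
    ((hφ (2 * (C + B))).and (eventually_ge_atTop 1))).exists
  have h1 : (1 : ℝ) ≤ n := by exact_mod_cast hn3
  have h2 := Real.log_le_log (hpos n) hk
  rw [log_pq_mul hx hk1] at h2
  obtain ⟨k, rfl⟩ := Nat.exists_eq_add_of_le' hk1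
  have h3 := hall k
  have h4 := hall (k + 1)
  have hkn' : (k : ℝ) + 1 ≤ n := by exact_mod_cast hkn
  have h5 : B * ((k + 1 : ℕ) : ℝ) ≤ B * n := by push_cast; gcongr
  have h6 : B * (k : ℝ) ≤ B * n := by gcongr; linarith
  have h7 : C ≤ C * n := le_mul_of_one_le_right hC h1
  linarith

/-! ### Points with prescribed partial quotients -/

/-- Existence of a point with prescribed partial quotients. By Tychonoff there is a sequence `u` in
`[0, 1]` solving `u_i (a_i + u_{i+1}) = 1` for all `i`; it is the Gauss orbit of `u_0`. -/
lemma exists_infExp (a : ℕ → ℕ) (ha : ∀ n, 1 ≤ a n) :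
    ∃ x, InfExp x ∧ ∀ n, pq x (n + 1) = a n := by
  let S : (ℕ → ℕ) → ℕ → Set (ℕ → ℝ) := fun a n =>
    {u | (∀ i, u i ∈ Set.Icc (0 : ℝ) 1) ∧ ∀ i < n, u i * (a i + u (i + 1)) = 1}
  have hne : ∀ n (a : ℕ → ℕ), (∀ n, 1 ≤ a n) → (S a n).Nonempty := by
    intro n
    induction n with
    | zero => exact fun a _ => ⟨fun _ => 0, by simp [S]⟩
    | succ n ih =>
      intro a ha
      obtain ⟨u, hu, hu'⟩ := ih (fun i => a (i + 1)) fun i => ha (i + 1)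
      have h0 := hu 0
      have ha0 : (1 : ℝ) ≤ a 0 := by exact_mod_cast ha 0
      have hp : (1 : ℝ) ≤ a 0 + u 0 := by linarith [h0.1]
      refine ⟨fun i => Nat.casesOn i (1 / (a 0 + u 0)) u, fun i => ?_, fun i hi => ?_⟩
      · cases i with
        | zero => exact ⟨one_div_nonneg.2 (by linarith), (div_le_one (by linarith)).2 hp⟩
        | succ i => exact hu i
      · cases i with
        | zero => exact one_div_mul_cancel (by linarith)
        | succ i => exact hu' i (by omega)
  obtain ⟨u, hu⟩ := IsCompact.nonempty_iInter_of_sequence_nonempty_isCompact_isClosed (S a)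
    (fun n u hu => ⟨hu.1, fun i hi => hu.2 i (by omega)⟩) (fun n => hne n a ha)
    (by
      have : S a 0 = Set.univ.pi fun _ => Set.Icc (0 : ℝ) 1 := by
        ext u; simp only [S, Set.mem_ofPred_eq, Set.mem_univ_pi, Nat.not_lt_zero]; simp
      rw [this]
      exact isCompact_univ_pi fun _ => isCompact_Icc)
    (by
      intro n
      have : S a n = (⋂ i, {u : ℕ → ℝ | u i ∈ Set.Icc (0 : ℝ) 1}) ∩
          ⋂ i, ⋂ (_ : i < n), {u : ℕ → ℝ | u i * (a i + u (i + 1)) = 1} := by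
        ext u; simp [S]
      rw [this]
      refine IsClosed.inter (isClosed_iInter fun i => isClosed_Icc.preimage (continuous_apply i))
        (isClosed_iInter fun i => isClosed_iInter fun _ => isClosed_eq ?_ continuous_const)
      fun_prop)
  rw [Set.mem_iInter] at hu
  have hI : ∀ i, u i ∈ Set.Icc (0 : ℝ) 1 := (hu 0).1
  have hr : ∀ i, u i * (a i + u (i + 1)) = 1 := fun i => (hu (i + 1)).2 i (by omega)
  have hu0 : ∀ i, 0 < u i := fun i =>
    lt_of_le_of_ne (hI i).1 fun h => by have := hr i; rw [← h] at this; simp at this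
  have hinv : ∀ i, 1 / u i = a i + u (i + 1) := fun i => by
    rw [div_eq_iff (hu0 i).ne', mul_comm]; exact (hr i).symm
  have hu1 : ∀ i, u i < 1 := fun i => by
    have h1 : (1 : ℝ) ≤ a i := by exact_mod_cast ha i
    have h2 := hu0 (i + 1)
    have h3 := hr i
    have h4 := hu0 i
    nlinarith
  have hfl : ∀ i, ⌊1 / u i⌋ = a i := fun i => by
    rw [Int.floor_eq_iff, hinv i]
    have := hu0 (i + 1)
    have := hu1 (i + 1)
    push_cast
    constructor <;> linarith
  have hit : ∀ n, gaussMap^[n] (u 0) = u n := by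
    intro n
    induction n with
    | zero => rfl
    | succ n ih =>
      rw [Function.iterate_succ_apply', ih, gaussMap, hfl n, hinv n]
      simp
  refine ⟨u 0, fun n => by rw [hit]; exact ⟨hu0 n, hu1 n⟩, fun n => ?_⟩
  rw [pq, Nat.add_sub_cancel, hit, ← Int.floor_toNat, hfl]
  simp

/-! ### Cantor series and the lower bound -/

/-- The remainders in the Cantor series expansion of `t ∈ [0, 1)` with respect to the varying
bases `M 0, M 1, …`. -/
noncomputable def cantorRem (M : ℕ → ℕ) (t : ℝ) : ℕ → ℝ
  | 0 => t
  | n + 1 => Int.fract (M n * cantorRem M t n)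

/-- The digits of the Cantor series expansion of `t`, i.e.
`t = ∑ cantorDigit M t n / (M 0 ⋯ M n)`. -/
noncomputable def cantorDigit (M : ℕ → ℕ) (t : ℝ) (n : ℕ) : ℕ := ⌊M n * cantorRem M t n⌋₊

lemma cantorRem_mem {M : ℕ → ℕ} {t : ℝ} (ht : t ∈ Set.Ico (0 : ℝ) 1) (n : ℕ) :
    cantorRem M t n ∈ Set.Ico (0 : ℝ) 1 := by
  cases n with
  | zero => exact ht
  | succ n => exact ⟨Int.fract_nonneg _, Int.fract_lt_one _⟩

lemma mul_cantorRem {M : ℕ → ℕ} {t : ℝ} (ht : t ∈ Set.Ico (0 : ℝ) 1) (n : ℕ) :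
    M n * cantorRem M t n = cantorDigit M t n + cantorRem M t (n + 1) := by
  have h0 : 0 ≤ M n * cantorRem M t n := mul_nonneg (by positivity) (cantorRem_mem ht n).1
  rw [cantorDigit, natCast_floor_eq_intCast_floor h0, cantorRem, Int.floor_add_fract]

lemma cantorDigit_lt {M : ℕ → ℕ} (hM : ∀ n, 2 ≤ M n) {t : ℝ} (ht : t ∈ Set.Ico (0 : ℝ) 1) (n : ℕ) :
    cantorDigit M t n < M n := by
  have h0 : 0 ≤ M n * cantorRem M t n := mul_nonneg (by positivity) (cantorRem_mem ht n).1
  rw [cantorDigit, Nat.floor_lt h0]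
  have : (0 : ℝ) < M n := by exact_mod_cast (by have := hM n; omega : 0 < M n)
  exact mul_lt_of_lt_one_right this (cantorRem_mem ht n).2

/-- The difference of two numbers whose first `n` Cantor digits agree. -/
lemma sub_eq_cantorRem {M : ℕ → ℕ} (hM : ∀ n, 2 ≤ M n) {t t' : ℝ} (ht : t ∈ Set.Ico (0 : ℝ) 1)
    (ht' : t' ∈ Set.Ico (0 : ℝ) 1) (n : ℕ) (h : ∀ i < n, cantorDigit M t i = cantorDigit M t' i) :
    t - t' = (cantorRem M t n - cantorRem M t' n) / ∏ i ∈ Finset.range n, (M i : ℝ) := by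
  induction n with
  | zero => simp [cantorRem]
  | succ n ih =>
    have hM0 : (M n : ℝ) ≠ 0 := by exact_mod_cast (by have := hM n; omega : M n ≠ 0)
    have hP : ∏ i ∈ Finset.range n, (M i : ℝ) ≠ 0 := Finset.prod_ne_zero_iff.2 fun i _ => by
      exact_mod_cast (by have := hM i; omega : M i ≠ 0)
    rw [ih fun i hi => h i (by omega), Finset.prod_range_succ, div_eq_div_iff hP (mul_ne_zero hP hM0)]
    have h1 := mul_cantorRem (M := M) ht n
    have h2 := mul_cantorRem (M := M) ht' n
    rw [h n (by omega)] at h1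
    linear_combination (∏ i ∈ Finset.range n, (M i : ℝ)) * (h1 - h2)

lemma exists_first_digit_ne {M : ℕ → ℕ} (hM : ∀ n, 2 ≤ M n) {t t' : ℝ}
    (ht : t ∈ Set.Ico (0 : ℝ) 1) (ht' : t' ∈ Set.Ico (0 : ℝ) 1) (hne : t ≠ t') :
    ∃ n, cantorDigit M t n ≠ cantorDigit M t' n ∧
      ∀ i < n, cantorDigit M t i = cantorDigit M t' i := by
  classical
  have hex : ∃ n, cantorDigit M t n ≠ cantorDigit M t' n := by
    by_contra! hcon
    have hb : ∀ n : ℕ, |t - t'| ≤ (1 / 2) ^ n := by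
      intro n
      have hP : (2 : ℝ) ^ n ≤ ∏ i ∈ Finset.range n, (M i : ℝ) := by
        have := Finset.prod_le_prod (s := Finset.range n) (f := fun _ => (2 : ℝ))
          (g := fun i => (M i : ℝ)) (fun _ _ => by norm_num) (fun i _ => by exact_mod_cast hM i)
        simpa using this
      have hP0 : (0 : ℝ) < 2 ^ n := by positivity
      rw [sub_eq_cantorRem hM ht ht' n fun i _ => hcon i, abs_div,
        abs_of_pos (hP0.trans_le hP), one_div, inv_pow, ← one_div]
      have h1 := cantorRem_mem (M := M) ht n
      have h2 := cantorRem_mem (M := M) ht' n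
      apply div_le_div₀ zero_le_one _ hP0 hP
      rw [abs_le]; constructor <;> linarith [h1.1, h1.2, h2.1, h2.2]
    have h0 : |t - t'| ≤ 0 := ge_of_tendsto'
      (tendsto_pow_atTop_nhds_zero_of_lt_one (by norm_num) (by norm_num : (1 / 2 : ℝ) < 1)) hb
    exact hne (sub_eq_zero.1 (abs_nonpos_iff.1 h0))
  exact ⟨Nat.find hex, Nat.find_spec hex, fun i hi => not_not.1 (Nat.find_min hex hi)⟩

/-- The Hölder estimate at the first differing digit: `δ` is the difference of these digits, `m`
the base at that place, `P` the product of the previous bases, and `A` an exponential factor. -/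
lemma holder_arith {P m A δ r C : ℝ} (hP : 0 < P) (hδ : 1 ≤ δ) (hδm : δ ≤ m) (hA : 1 ≤ A)
    (hr1 : r < 1) (hC : 2 * A * m ^ r * P ^ (2 * r - 1) ≤ C) :
    2 * δ / (P * m) ≤ C * (δ / (A * (P * m) ^ 2)) ^ r := by
  have hm : 0 < m := by linarith
  have hδ0 : 0 < δ := by linarith
  have hA0 : 0 < A := by linarith
  have e1 : (δ / (A * (P * m) ^ 2)) ^ r = δ ^ r / (A ^ r * (P ^ (2 * r) * m ^ (2 * r))) := by
    rw [Real.div_rpow hδ0.le (by positivity), Real.mul_rpow hA0.le (by positivity),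
      mul_pow, Real.mul_rpow (by positivity) (by positivity), ← Real.rpow_natCast P,
      ← Real.rpow_natCast m, ← Real.rpow_mul hP.le, ← Real.rpow_mul hm.le]
    norm_num
  have e2 : A ^ r ≤ A := by
    simpa using Real.rpow_le_rpow_of_exponent_le hA hr1.le
  have e3 : δ ≤ δ ^ r * m ^ (1 - r) := by
    calc δ = δ ^ r * δ ^ (1 - r) := by rw [← Real.rpow_add hδ0]; simp
      _ ≤ _ := by
        gcongr
  have hb : 0 ≤ (δ / (A * (P * m) ^ 2)) ^ r := by positivity
  calc 2 * δ / (P * m) ≤ 2 * (δ ^ r * m ^ (1 - r)) / (P * m) := by gcongr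
    _ = 2 * A * m ^ r * P ^ (2 * r - 1) * (δ ^ r / (A * (P ^ (2 * r) * m ^ (2 * r)))) := by
      have a1 : m ^ (1 - r) = m / m ^ r := by rw [Real.rpow_sub hm, Real.rpow_one]
      have a2 : P ^ (2 * r - 1) = P ^ (2 * r) / P := by rw [Real.rpow_sub hP, Real.rpow_one]
      have a3 : m ^ (2 * r) = m ^ r * m ^ r := by rw [← Real.rpow_add hm]; ring_nf
      rw [a1, a2, a3]
      field_simp
    _ ≤ 2 * A * m ^ r * P ^ (2 * r - 1) * (δ / (A * (P * m) ^ 2)) ^ r := by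
      rw [e1]
      gcongr
    _ ≤ _ := by gcongr

/-- The boundedness that makes the Cantor coding Hölder of exponent `r < 1 / (c + 1)`: with
`M n ≈ exp (c ^ (n + 1))`, the logarithm of the left side is
`O(n) - (1 - r (c + 1)) / (c - 1) * c ^ (n + 1)`. -/
lemma exists_growth_bound {c r : ℝ} (hc : 1 < c) (hr0 : 0 < r) (hr : r * (c + 1) < 1) :
    ∃ C : ℝ, ∀ n : ℕ, 2 * (2 * 4 ^ (n + 1)) * (⌈Real.exp (c ^ (n + 1))⌉₊ : ℝ) ^ r *
      (∏ i ∈ Finset.range n, (⌈Real.exp (c ^ (i + 1))⌉₊ : ℝ)) ^ (2 * r - 1) ≤ C := by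
  have hc1 : 0 < c - 1 := by linarith
  set κ := (1 - r * (c + 1)) / (c - 1) with hκ
  have hκ0 : 0 < κ := div_pos (by linarith) hc1
  set L := Real.log 4
  have hL : 0 < L := Real.log_pos (by norm_num)
  have hr2 : 2 * r - 1 ≤ 0 := by nlinarith
  obtain ⟨C, hC⟩ : ∃ C : ℝ, ∀ n : ℕ, L * n - κ * c ^ (n + 1) ≤ C := by
    have h1 : Tendsto (fun n : ℕ => L * ((n : ℝ) ^ 1 * (1 / c) ^ n)) atTop (nhds (L * 0)) :=
      (tendsto_pow_const_mul_const_pow_of_lt_one 1 (by positivity)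
        ((div_lt_one (by linarith)).2 hc)).const_mul L
    rw [mul_zero] at h1
    have h2 : ∀ᶠ n : ℕ in atTop, L * n - κ * c ^ (n + 1) ≤ 0 := by
      filter_upwards [h1.eventually_lt_const hκ0] with n hn
      have hcn : 0 < c ^ n := by positivity
      rw [pow_one, div_pow, one_pow, mul_one_div, ← mul_div_assoc, div_lt_iff₀ hcn] at hn
      have : κ * c ^ n ≤ κ * c ^ (n + 1) := by
        gcongr
        · exact hc.le
        · omega
      linarith
    obtain ⟨C, hC⟩ := (isBoundedUnder_of_eventually_le h2).bddAbove_range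
    exact ⟨C, fun n => hC ⟨n, rfl⟩⟩
  refine ⟨Real.exp (2 * L + r + (1 - 2 * r) * c / (c - 1) + C), fun n => ?_⟩
  have e1 : (2 * (2 * 4 ^ (n + 1)) : ℝ) = Real.exp (L * n + 2 * L) := by
    rw [show L * n + 2 * L = (n + 2 : ℕ) * L by push_cast; ring, Real.exp_nat_mul,
      Real.exp_log (by norm_num)]
    ring
  have e2 : (⌈Real.exp (c ^ (n + 1))⌉₊ : ℝ) ^ r ≤ Real.exp (r + r * c ^ (n + 1)) := by
    have hE : 1 ≤ Real.exp (c ^ (n + 1)) := Real.one_le_exp (by positivity)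
    have h1 : (⌈Real.exp (c ^ (n + 1))⌉₊ : ℝ) ≤ Real.exp (1 + c ^ (n + 1)) := by
      have := Nat.ceil_lt_add_one (zero_le_one.trans hE)
      have h2 : (2 : ℝ) ≤ Real.exp 1 := by linarith [Real.add_one_le_exp (1 : ℝ)]
      rw [Real.exp_add]
      nlinarith
    calc _ ≤ Real.exp (1 + c ^ (n + 1)) ^ r := by gcongr
      _ = _ := by rw [← Real.exp_mul]; ring_nf
  have e3 : (∏ i ∈ Finset.range n, (⌈Real.exp (c ^ (i + 1))⌉₊ : ℝ)) ^ (2 * r - 1) ≤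
      Real.exp ((c ^ (n + 1) - c) / (c - 1) * (2 * r - 1)) := by
    have h1 : Real.exp ((c ^ (n + 1) - c) / (c - 1)) ≤
        ∏ i ∈ Finset.range n, (⌈Real.exp (c ^ (i + 1))⌉₊ : ℝ) := by
      have : (c ^ (n + 1) - c) / (c - 1) = ∑ i ∈ Finset.range n, c ^ (i + 1) := by
        simp_rw [pow_succ]
        rw [← Finset.sum_mul, geom_sum_eq hc.ne']
        ring
      rw [this, Real.exp_sum]
      exact Finset.prod_le_prod (fun _ _ => (Real.exp_pos _).le) fun _ _ => Nat.le_ceil _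
    rw [Real.exp_mul]
    exact Real.rpow_le_rpow_of_nonpos (Real.exp_pos _) h1 hr2
  calc _ ≤ Real.exp (L * n + 2 * L) * Real.exp (r + r * c ^ (n + 1)) *
      Real.exp ((c ^ (n + 1) - c) / (c - 1) * (2 * r - 1)) := by
        rw [e1]; gcongr
    _ = Real.exp (2 * L + r + (1 - 2 * r) * c / (c - 1) + (L * n - κ * c ^ (n + 1))) := by
        rw [← Real.exp_add, ← Real.exp_add, hκ]
        congr 1
        field_simp
        ring
    _ ≤ _ := by gcongr; exact hC n

/-- Separation of two points whose partial quotients are `M n + digit`, in terms of the first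
differing digit. -/
lemma le_abs_sub {M : ℕ → ℕ} (hM : ∀ n, 2 ≤ M n) {x y : ℝ} (hx : InfExp x) (hy : InfExp y)
    {d d' : ℕ → ℕ} (hd : ∀ n, d n < M n) (hd' : ∀ n, d' n < M n)
    (hxd : ∀ n, pq x (n + 1) = M n + d n) (hyd : ∀ n, pq y (n + 1) = M n + d' n)
    {n : ℕ} (hn : d n ≠ d' n) (heq : ∀ i < n, d i = d' i) :
    |(d n : ℝ) - d' n| / (2 * 4 ^ (n + 1) * ((∏ i ∈ Finset.range n, (M i : ℝ)) * M n) ^ 2) ≤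
      |x - y| := by
  have hlow : ∀ {z : ℝ} {e : ℕ → ℕ}, InfExp z → (∀ n, e n < M n) →
      (∀ n, pq z (n + 1) = M n + e n) → ∀ i, (2 * (M i : ℝ))⁻¹ ≤ gaussMap^[i] z := by
    intro z e hz he hze i
    refine le_trans (inv_anti₀ (by positivity) ?_) (hz.inv_le i)
    have h1 : pq z (i + 1) + 1 ≤ 2 * M i := by have := he i; rw [hze i]; omega
    exact_mod_cast h1
  have hhalf : ∀ {z : ℝ} {e : ℕ → ℕ}, InfExp z →
      (∀ n, pq z (n + 1) = M n + e n) → gaussMap^[n + 1] z ≤ 1 / 2 := by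
    intro z e hz hze
    refine (hz.le_inv (n + 1)).trans ?_
    rw [one_div]
    apply inv_anti₀ two_pos
    have h1 : 2 ≤ pq z (n + 1 + 1) := by have := hM (n + 1); rw [hze (n + 1)]; omega
    exact_mod_cast h1
  have hδ : (1 : ℝ) ≤ |(d n : ℝ) - d' n| := by
    have h1 : (1 : ℤ) ≤ |(d n : ℤ) - d' n| := Int.one_le_abs (by omega)
    exact_mod_cast h1
  have hdiff : |(d n : ℝ) - d' n| / 2 ≤ |1 / gaussMap^[n] x - 1 / gaussMap^[n] y| := by
    rw [hx.inv_eq, hy.inv_eq, hxd, hyd]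
    push_cast
    have h1 := hhalf hx hxd
    have h2 := hhalf hy hyd
    have h3 := (hx (n + 1)).1
    have h4 := (hy (n + 1)).1
    have h5 : |gaussMap^[n + 1] x - gaussMap^[n + 1] y| ≤ 1 / 2 := by
      rw [abs_le]; constructor <;> linarith
    have h6 := abs_sub_abs_le_abs_sub ((d n : ℝ) - d' n)
      (-(gaussMap^[n + 1] x - gaussMap^[n + 1] y))
    rw [abs_neg] at h6
    rw [show (M n : ℝ) + d n + gaussMap^[n + 1] x - (M n + d' n + gaussMap^[n + 1] y) =
      (d n : ℝ) - d' n - -(gaussMap^[n + 1] x - gaussMap^[n + 1] y) by ring]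
    linarith
  have hprod : ((4 : ℝ) ^ (n + 1) * ((∏ i ∈ Finset.range n, (M i : ℝ)) * M n) ^ 2)⁻¹ ≤
      ∏ i ∈ Finset.range (n + 1), (gaussMap^[i] x * gaussMap^[i] y) := by
    calc _ = ∏ i ∈ Finset.range (n + 1), ((2 * (M i : ℝ))⁻¹ * (2 * (M i : ℝ))⁻¹) := by
          rw [← Finset.prod_range_succ, ← Finset.prod_pow, ← Finset.card_range (n + 1),
            ← Finset.prod_const, Finset.card_range, ← Finset.prod_mul_distrib,
            ← Finset.prod_inv_distrib]
          refine Finset.prod_congr rfl fun i _ => ?_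
          rw [← mul_inv]; ring
      _ ≤ _ := Finset.prod_le_prod (fun _ _ => by positivity) fun i _ =>
          mul_le_mul (hlow hx hd hxd i) (hlow hy hd' hyd i) (by positivity) (hx i).1.le
  rw [abs_sub_eq_prod hx hy n fun i hi => by rw [hxd, hyd, heq i hi],
    abs_sub_inv_eq (hx n).1 (hy n).1, mul_assoc |1 / gaussMap^[n] x - _|,
    mul_comm (gaussMap^[n] x * _),
    ← Finset.prod_range_succ (fun i => gaussMap^[i] x * gaussMap^[i] y)]
  calc _ = |(d n : ℝ) - d' n| / 2 *
        ((4 : ℝ) ^ (n + 1) * ((∏ i ∈ Finset.range n, (M i : ℝ)) * M n) ^ 2)⁻¹ := by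
        rw [mul_assoc, ← div_div, div_eq_mul_inv]
    _ ≤ _ := mul_le_mul hdiff hprod (by positivity) (abs_nonneg _)

/-- The numbers with `a_{n+1} ≥ exp (c ^ (n + 1))` for all `n` form a set of dimension at least
`1 / (c + 1)`: Cantor series expansions map a subset of it onto `[0, 1)` in a Hölder way. -/
lemma le_dimH_fast {c : ℝ} (hc : 1 < c) {r : NNReal} (hr0 : 0 < r) (hr : r * (c + 1) < 1) :
    (r : ℝ≥0∞) ≤ dimH {x : ℝ | InfExp x ∧ ∀ n, Real.exp (c ^ (n + 1)) ≤ pq x (n + 1)} := by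
  set E := {x : ℝ | InfExp x ∧ ∀ n, Real.exp (c ^ (n + 1)) ≤ pq x (n + 1)}
  obtain ⟨C, hC⟩ := exists_growth_bound hc (NNReal.coe_pos.2 hr0) hr
  set M : ℕ → ℕ := fun n => ⌈Real.exp (c ^ (n + 1))⌉₊ with hMdef
  have hM : ∀ n, 2 ≤ M n := by
    intro n
    have h1 : (1 : ℝ) ≤ c ^ (n + 1) := one_le_pow₀ hc.le
    have h2 := Real.add_one_le_exp (c ^ (n + 1))
    have h3 : (2 : ℝ) ≤ M n := by
      have := Nat.le_ceil (Real.exp (c ^ (n + 1)))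
      simp only [hMdef]; linarith
    exact_mod_cast h3
  have hr1 : (r : ℝ) < 1 := by
    have := NNReal.coe_pos.2 hr0
    nlinarith
  choose g hg hgd using fun t : ℝ =>
    exists_infExp (fun n => M n + cantorDigit M t n) fun n => by have := hM n; omega
  have hC0 : 0 ≤ C := le_trans (by positivity) (hC 0)
  have hold : ∀ t ∈ Set.Ico (0 : ℝ) 1, ∀ t' ∈ Set.Ico (0 : ℝ) 1,
      |t - t'| ≤ C * |g t - g t'| ^ (r : ℝ) := by
    intro t ht t' ht'
    rcases eq_or_ne t t' with rfl | hne
    · simp only [sub_self, abs_zero]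
      positivity
    obtain ⟨n, hn, heq⟩ := exists_first_digit_ne hM ht ht' hne
    set P := ∏ i ∈ Finset.range n, (M i : ℝ) with hPdef
    have hMpos : ∀ i, (0 : ℝ) < M i := fun i => by
      exact_mod_cast (by have := hM i; omega : 0 < M i)
    have hP : 0 < P := Finset.prod_pos fun i _ => hMpos i
    set δ := |(cantorDigit M t n : ℝ) - cantorDigit M t' n| with hδdef
    have hδ : 1 ≤ δ := by
      have h1 : (1 : ℤ) ≤ |(cantorDigit M t n : ℤ) - cantorDigit M t' n| :=
        Int.one_le_abs (by omega)
      rw [hδdef]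
      exact_mod_cast h1
    have hδm : δ ≤ M n := by
      have h1 : (cantorDigit M t n : ℝ) < M n := by exact_mod_cast cantorDigit_lt hM ht n
      have h2 : (cantorDigit M t' n : ℝ) < M n := by exact_mod_cast cantorDigit_lt hM ht' n
      have h3 : (0 : ℝ) ≤ cantorDigit M t n := by positivity
      have h4 : (0 : ℝ) ≤ cantorDigit M t' n := by positivity
      rw [hδdef, abs_le]; constructor <;> linarith
    have hsep := le_abs_sub hM (hg t) (hg t') (cantorDigit_lt hM ht) (cantorDigit_lt hM ht')
      (hgd t) (hgd t') hn heq
    have hup : |t - t'| ≤ 2 * δ / (P * M n) := by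
      rw [sub_eq_cantorRem hM ht ht' n heq, abs_div, ← hPdef, abs_of_pos hP, ← div_div,
        div_right_comm]
      gcongr
      rw [le_div_iff₀ (hMpos n), mul_comm, ← abs_of_pos (hMpos n), ← abs_mul, mul_sub,
        mul_cantorRem ht, mul_cantorRem ht']
      have h1 := cantorRem_mem (M := M) ht (n + 1)
      have h2 := cantorRem_mem (M := M) ht' (n + 1)
      have h3 : |cantorRem M t (n + 1) - cantorRem M t' (n + 1)| ≤ 1 := by
        rw [abs_le]; constructor <;> linarith [h1.1, h1.2, h2.1, h2.2]
      rw [add_sub_add_comm]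
      refine (abs_add_le _ _).trans ?_
      linarith
    calc |t - t'| ≤ _ := hup
      _ ≤ C * (δ / (2 * 4 ^ (n + 1) * (P * M n) ^ 2)) ^ (r : ℝ) := by
        refine holder_arith hP hδ hδm ?_ hr1 (hC n)
        have : (1 : ℝ) ≤ 4 ^ (n + 1) := one_le_pow₀ (by norm_num)
        linarith
      _ ≤ _ := by gcongr
  -- `g` is injective on `[0, 1)`, and its inverse there is Hölder.
  have hinj : Set.InjOn g (Set.Ico 0 1) := by
    intro t ht t' ht' h
    have h1 := hold t ht t' ht'
    rw [h, sub_self, abs_zero, Real.zero_rpow (NNReal.coe_pos.2 hr0).ne', mul_zero] at h1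
    exact sub_eq_zero.1 (abs_nonpos_iff.1 h1)
  have hH : HolderOnWith C.toNNReal r (Function.invFunOn g (Set.Ico 0 1)) (g '' Set.Ico 0 1) := by
    rintro _ ⟨t, ht, rfl⟩ _ ⟨t', ht', rfl⟩
    rw [hinj.leftInvOn_invFunOn ht, hinj.leftInvOn_invFunOn ht', edist_dist, edist_dist,
      Real.dist_eq, Real.dist_eq, ENNReal.ofReal_rpow_of_nonneg (abs_nonneg _) r.coe_nonneg]
    change _ ≤ ENNReal.ofReal C * _
    rw [← ENNReal.ofReal_mul hC0]
    exact ENNReal.ofReal_le_ofReal (hold t ht t' ht')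
  have h1 := hH.dimH_image_le hr0
  rw [hinj.leftInvOn_invFunOn.image_image, Real.dimH_of_nonempty_interior (by simp)] at h1
  simp only [Module.finrank_self, Nat.cast_one] at h1
  have hr0' : (r : ℝ≥0∞) ≠ 0 := by exact_mod_cast hr0.ne'
  rw [ENNReal.le_div_iff_mul_le (Or.inl hr0') (Or.inl ENNReal.coe_ne_top), one_mul] at h1
  refine h1.trans (dimH_mono ?_)
  rintro _ ⟨t, -, rfl⟩
  refine ⟨hg t, fun n => ?_⟩
  rw [hgd t n]
  push_cast
  have := Nat.le_ceil (Real.exp (c ^ (n + 1)))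
  have h0 : (0 : ℝ) ≤ cantorDigit M t n := by positivity
  simp only [hMdef] at *
  linarith

/-- The lower bound. Rational points need not be excluded from the set in `le_dimH_fast`, as they
are countably many. -/
lemma lower {φ : ℕ → ℝ} {c : ℝ} (hc : 1 < c)
    (hφ : ∃ᶠ n : ℕ in atTop, φ n ≤ Real.exp (c ^ n)) {r : NNReal} (hr0 : 0 < r)
    (hr : r * (c + 1) < 1) : (r : ℝ≥0∞) ≤ dimH (F2 φ) := by
  have hsub : {x : ℝ | InfExp x ∧ ∀ n, Real.exp (c ^ (n + 1)) ≤ pq x (n + 1)} ⊆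
      F2 φ ∪ Set.range ((↑) : ℚ → ℝ) := by
    rintro x ⟨hx, hxn⟩
    by_cases hi : Irrational x
    · refine Or.inl ⟨hx 0, hi, Nat.frequently_atTop_iff_infinite.1 ?_⟩
      refine (hφ.and_eventually (eventually_ge_atTop 2)).mono ?_
      rintro n ⟨hn, hn2⟩
      -- A single large partial quotient `a_n` gives both products, at `n - 1` and at `n`.
      obtain ⟨m, rfl⟩ := Nat.exists_eq_add_of_le' hn2
      have hbig : φ (m + 2) ≤ pq x (m + 2) := hn.trans (hxn (m + 1))
      have h1 : (1 : ℝ) ≤ pq x (m + 1) := by exact_mod_cast hx.pq_pos m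
      have h3 : (1 : ℝ) ≤ pq x (m + 2 + 1) := by exact_mod_cast hx.pq_pos (m + 2)
      have h2 : (0 : ℝ) ≤ pq x (m + 2) := by positivity
      exact ⟨m + 1, m + 2, by omega, by omega, by omega, le_rfl, by omega,
        hbig.trans (le_mul_of_one_le_left h2 h1), hbig.trans (le_mul_of_one_le_right h2 h3)⟩
    · exact Or.inr (not_not.1 hi)
  have h := (le_dimH_fast hc hr0 hr).trans (dimH_mono hsub)
  rwa [dimH_union, dimH_countable (Set.countable_range _), max_eq_left (zero_le)] at h

/-! ### The dimension -/

theorem dimH_F2_of_liminf_eq_top (φ : ℕ → ℝ) (hpos : ∀ n, 0 < φ n)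
    (hB : Filter.atTop.liminf (fun n : ℕ => ((Real.log (φ n) / n : ℝ) : EReal)) = ⊤)
    (b : ℝ≥0∞) (hb : 1 ≤ b)
    (hbdef : Filter.atTop.liminf
      (fun n : ℕ => ((Real.log (Real.log (φ n)) / n : ℝ) : EReal)) = ENNReal.log b) :
    dimH (F2 φ) = 1 / (1 + b) := by
  have hlin : ∀ D : ℝ, ∀ᶠ n : ℕ in atTop, D * n < Real.log (φ n) := by
    intro D
    have h1 : (D : EReal) <
        Filter.atTop.liminf (fun n : ℕ => ((Real.log (φ n) / n : ℝ) : EReal)) := by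
      rw [hB]; exact EReal.coe_lt_top D
    filter_upwards [eventually_lt_of_lt_liminf h1, eventually_gt_atTop 0] with n hn hn0
    rw [EReal.coe_lt_coe_iff, lt_div_iff₀ (by exact_mod_cast hn0)] at hn
    exact hn
  -- In particular `log φ` is eventually positive, so `log (log φ)` carries no junk value.
  have hlogpos : ∀ᶠ n : ℕ in atTop, 0 < Real.log (φ n) := by simpa using hlin 0
  apply le_antisymm
  · apply le_of_forall_gt_imp_ge_of_dense
    intro y hy
    rcases eq_or_ne y ⊤ with rfl | hyt
    · exact le_top
    lift y to NNReal using hyt with s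
    rw [ENNReal.div_lt_iff (Or.inl (by simp)) (Or.inr ENNReal.one_ne_top)] at hy
    rcases hb.eq_or_lt with rfl | hb1
    · refine upper_half hpos hlin ?_
      have h1 : (1 : NNReal) < s * (1 + 1) := by exact_mod_cast hy
      have h2 : (1 : ℝ) < s * (1 + 1) := by exact_mod_cast h1
      linarith
    · have hs0 : s ≠ 0 := by rintro rfl; simp at hy
      have hs0' : (s : ℝ≥0∞) ≠ 0 := by exact_mod_cast hs0
      have hinv : (s : ℝ≥0∞)⁻¹ < b + 1 := by
        rw [← one_div, ENNReal.div_lt_iff (Or.inl hs0') (Or.inl ENNReal.coe_ne_top), mul_comm,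
          add_comm]
        exact hy
      have hmax : max 1 ((s : ℝ≥0∞)⁻¹ - 1) < b := by
        refine max_lt hb1 ?_
        rcases le_total (s : ℝ≥0∞)⁻¹ 1 with h | h
        · rw [tsub_eq_zero_of_le h]; exact zero_lt_one.trans hb1
        · exact (ENNReal.sub_lt_iff_lt_right (by simp) h).2 hinv
      obtain ⟨c', hc'1, hc'b⟩ := ENNReal.lt_iff_exists_nnreal_btwn.1 hmax
      obtain ⟨c, hcc', hcb⟩ := ENNReal.lt_iff_exists_nnreal_btwn.1 hc'b
      have hc1 : (1 : ℝ) < c' := by exact_mod_cast (le_max_left _ _).trans_lt hc'1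
      have hcc : (c' : ℝ) < c := by exact_mod_cast hcc'
      have hsc : (1 : ℝ) < (1 + c') * s := by
        have h1 : (s : ℝ≥0∞)⁻¹ < c' + 1 := by
          by_contra! h
          exact ((le_max_right _ _).trans_lt hc'1).not_ge
            (ENNReal.le_sub_of_add_le_right ENNReal.one_ne_top h)
        rw [← one_div, ENNReal.div_lt_iff (Or.inl hs0') (Or.inl ENNReal.coe_ne_top)] at h1
        have h2 : (1 : NNReal) < (c' + 1) * s := by exact_mod_cast h1
        rw [add_comm]
        exact_mod_cast h2
      refine upper_of_gt hpos (c := c) (α := c' - 1) (by linarith) (by linarith) ?_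
        (by rw [show (2 : ℝ) + (c' - 1) = 1 + c' by ring]; exact hsc)
      have hcpos : (0 : ℝ) < c := by linarith
      have hlt : ((Real.log c : ℝ) : EReal) < Filter.atTop.liminf
          (fun n : ℕ => ((Real.log (Real.log (φ n)) / n : ℝ) : EReal)) := by
        rw [hbdef, ← ENNReal.log_of_nnreal (by exact_mod_cast hcpos.ne')]
        exact ENNReal.log_lt_log hcb
      filter_upwards [eventually_lt_of_lt_liminf hlt, eventually_gt_atTop 0, hlogpos]
        with n hn hn0 hl
      rw [EReal.coe_lt_coe_iff, lt_div_iff₀ (by exact_mod_cast hn0), mul_comm,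
        Real.lt_log_iff_exp_lt hl, Real.exp_nat_mul, Real.exp_log hcpos] at hn
      exact hn.le
  · apply le_of_forall_lt_imp_le_of_dense
    intro y hy
    lift y to NNReal using (lt_top_of_lt hy).ne with r
    rcases eq_or_ne r 0 with rfl | hr0
    · simp
    have hbt : b ≠ ⊤ := by rintro rfl; simp at hy
    lift b to NNReal using hbt
    rw [ENNReal.lt_div_iff_mul_lt (Or.inl (by simp)) (Or.inl (by simp))] at hy
    have hrb : (r : ℝ) * (1 + b) < 1 := by
      have h1 : r * (1 + b) < 1 := by exact_mod_cast hy
      exact_mod_cast h1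
    have hrpos : (0 : ℝ) < r := NNReal.coe_pos.2 (pos_iff_ne_zero.2 hr0)
    have hb1 : (1 : ℝ) ≤ b := by exact_mod_cast hb
    obtain ⟨c, hbc, hc⟩ := exists_between (show (b : ℝ) < 1 / r - 1 by
      rw [lt_sub_iff_add_lt, lt_div_iff₀ hrpos]; linarith)
    have hcr : r * (c + 1) < 1 := by
      rw [lt_sub_iff_add_lt, lt_div_iff₀ hrpos] at hc; linarith
    refine lower (c := c) (by linarith) ?_ (pos_iff_ne_zero.2 hr0) hcr
    have hcpos : 0 < c := by linarith
    have hlt : Filter.atTop.liminf (fun n : ℕ => ((Real.log (Real.log (φ n)) / n : ℝ) : EReal)) <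
        ((Real.log c : ℝ) : EReal) := by
      rw [hbdef, ENNReal.log_of_nnreal (by rintro rfl; norm_num at hb1), EReal.coe_lt_coe_iff]
      exact Real.log_lt_log (by linarith) hbc
    refine ((frequently_lt_of_liminf_lt (h := hlt)).and_eventually
      ((eventually_gt_atTop 0).and hlogpos)).mono ?_
    rintro n ⟨hn, hn0, hl⟩
    rw [EReal.coe_lt_coe_iff, div_lt_iff₀ (by exact_mod_cast hn0), mul_comm,
      Real.log_lt_iff_lt_exp hl, Real.exp_nat_mul, Real.exp_log hcpos,
      Real.log_lt_iff_lt_exp (hpos n)] at hn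
    exact hn.le
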